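/- Let n ≥ 2 and d : Fin n → ℕ be monotone (d j ≤ d j' for j ≤ j') with d j ≥ 2 for every j, and set G = (d 0 − 1) * ((∏ j ≠ 0, d j) − 1). Then: (a) there exists a subspace of EuclideanSpace ℂ ((j : Fin n) → Fin (d j)) with finrank G in which every nonzero vector is genuinely multipartite entangled; and (b) every subspace with finrank equal to G + 1 contains a nonzero vector that is S-biseparable for some subset S ⊆ Fin n with S ≠ ∅ and S ≠ univ. Hence the maximum dimension of a genuinely entangled subspace equals (d 0 − 1)(∏_{j≥1} d j − 1). -/

import Mathlib

/-- `ψ` is biseparable across the bipartition `(S, Sᶜ)`. -/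
def Biseparable {n : ℕ} {d : Fin n → ℕ} (S : Set (Fin n))
    (ψ : EuclideanSpace ℂ ((j : Fin n) → Fin (d j))) : Prop :=
  ∃ (φ : ((j : S) → Fin (d j.val)) → ℂ) (χ : ((j : ↥Sᶜ) → Fin (d j.val)) → ℂ),
    ∀ i, ψ i = φ (fun j => i j.val) * χ (fun j => i j.val)

/-- A nonzero vector is genuinely multipartite entangled if it is not biseparable
across any nontrivial bipartition. -/
def GME {n : ℕ} {d : Fin n → ℕ}
    (ψ : EuclideanSpace ℂ ((j : Fin n) → Fin (d j))) : Prop :=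
  ψ ≠ 0 ∧ ∀ S : Set (Fin n), S ≠ ∅ → S ≠ Set.univ → ¬ Biseparable S ψ

section SparsePolynomial

open Polynomial

/-- The number of sign variations is less than the number of nonzero coefficients. -/
theorem signVariations_lt_card_support (P : ℝ[X]) (hP : P ≠ 0) :
    P.signVariations < P.support.card := by
  induction hn : P.support.card generalizing P with
  | zero => simp_all
  | succ k ih =>
    have hcard : P.eraseLead.support.card = k := P.card_support_eraseLead' hn
    by_cases h0 : P.eraseLead = 0
    · have hmon : P = monomial P.natDegree P.leadingCoeff := by
        conv_lhs => rw [← P.eraseLead_add_monomial_natDegree_leadingCoeff, h0, zero_add]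
      rw [hmon, signVariations_monomial]
      omega
    · have h1 := ih _ h0 hcard
      have h2 := P.signVariations_le_eraseLead_succ
      omega

/-- A sparse nonzero polynomial has fewer positive roots than terms. -/
theorem card_lt_card_support_of_pos_roots (P : ℝ[X]) (hP : P ≠ 0) (s : Finset ℕ)
    (hs : ∀ k ∈ s, P.eval ((k : ℝ) + 1) = 0) : s.card < P.support.card := by
  refine lt_of_le_of_lt ?_ (signVariations_lt_card_support P hP)
  refine le_trans ?_ P.roots_countP_pos_le_signVariations
  have hinj : Function.Injective (fun k : ℕ => (k : ℝ) + 1) := fun a b h => by simpa using h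
  have hle : (s.map ⟨_, hinj⟩).val ≤ P.roots.filter (0 < ·) := by
    rw [Multiset.le_iff_subset (Finset.nodup _)]
    intro x hx
    obtain ⟨k, hk, rfl⟩ := Finset.mem_map.1 hx
    refine Multiset.mem_filter.2 ⟨(mem_roots hP).2 (hs k hk), ?_⟩
    change (0 : ℝ) < (k : ℝ) + 1
    positivity
  simpa [Multiset.countP_eq_card_filter] using Multiset.card_le_card hle

theorem card_lt_card_of_real_sparse_zeros {ι : Type*} [Fintype ι] (e : ι → ℕ)
    (he : Function.Injective e) (φ : ι → ℝ) (hφ : φ ≠ 0) (s : Finset ℕ)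
    (hs : ∀ k ∈ s, ∑ i, φ i * ((k : ℝ) + 1) ^ e i = 0) : s.card < Fintype.card ι := by
  classical
  set P : ℝ[X] := ∑ i, monomial (e i) (φ i) with hPdef
  have hcoeff (i : ι) : P.coeff (e i) = φ i := by
    simp [hPdef, coeff_monomial, he.eq_iff]
  have hP : P ≠ 0 := by
    obtain ⟨i, hi⟩ := Function.ne_iff.1 hφ
    intro h
    apply hi
    rw [← hcoeff i, h]
    simp
  have hsupp : P.support ⊆ Finset.univ.image e := by
    intro k hk
    by_contra hk'
    apply mem_support_iff.1 hk
    simp only [hPdef, finsetSum_coeff, coeff_monomial]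
    refine Finset.sum_eq_zero fun i _ => if_neg ?_
    rintro rfl
    simp at hk'
  have h1 : s.card < P.support.card := by
    refine card_lt_card_support_of_pos_roots P hP s fun k hk => ?_
    rw [hPdef, eval_finsetSum]
    simpa using hs k hk
  exact h1.trans_le ((Finset.card_le_card hsupp).trans Finset.card_image_le)

theorem card_lt_card_of_sparse_zeros {ι : Type*} [Fintype ι] (e : ι → ℕ)
    (he : Function.Injective e) (φ : ι → ℂ) (hφ : φ ≠ 0) (s : Finset ℕ)
    (hs : ∀ k ∈ s, ∑ i, φ i * ((k : ℂ) + 1) ^ e i = 0) : s.card < Fintype.card ι := by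
  have hcast (k : ℕ) (m : ℕ) : ((k : ℂ) + 1) ^ m = ((((k : ℝ) + 1) ^ m : ℝ) : ℂ) := by
    push_cast; rfl
  by_cases hre : (fun i => (φ i).re) = 0
  · have him : (fun i => (φ i).im) ≠ 0 := by
      intro him
      exact hφ (funext fun i => Complex.ext (congrFun hre i) (congrFun him i))
    refine card_lt_card_of_real_sparse_zeros e he _ him s fun k hk => ?_
    have h := congrArg Complex.im (hs k hk)
    simpa only [hcast, Complex.im_sum, Complex.im_mul_ofReal, Complex.zero_im] using h
  · refine card_lt_card_of_real_sparse_zeros e he _ hre s fun k hk => ?_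
    have h := congrArg Complex.re (hs k hk)
    simpa only [hcast, Complex.re_sum, Complex.re_mul_ofReal, Complex.zero_re] using h

end SparsePolynomial

section Exponents

variable {n : ℕ} {d : Fin n → ℕ}

/-- The exponents in base `∑ j, d j` separate the restrictions of multi-indices to `S`. -/
theorem injective_sum_digits (hd : ∀ j, 0 < d j) (S : Set (Fin n)) [Fintype S] :
    Function.Injective (fun i : (j : S) → Fin (d j.val) =>
      ∑ j : S, (i j : ℕ) * (∑ l, d l) ^ (j.val : ℕ)) := by
  classical
  intro a b hab
  let glue : ((j : S) → Fin (d j.val)) → Fin n → Fin (∑ l, d l) := fun i j =>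
    Fin.castLE (Finset.single_le_sum (f := d) (fun _ _ => Nat.zero_le _) (Finset.mem_univ j))
      (if h : j ∈ S then i ⟨j, h⟩ else ⟨0, hd j⟩)
  have hsum (i : (j : S) → Fin (d j.val)) :
      (finFunctionFinEquiv (glue i) : ℕ) = ∑ j : S, (i j : ℕ) * (∑ l, d l) ^ (j.val : ℕ) := by
    rw [finFunctionFinEquiv_apply, ← Fintype.sum_subtype_add_sum_subtype (fun j => j ∈ S)
      (fun j => (glue i j : ℕ) * (∑ l, d l) ^ (j : ℕ))]
    have h0 : ∑ j : {j // j ∉ S}, (glue i j : ℕ) * (∑ l, d l) ^ (j.val : ℕ) = 0 :=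
      Finset.sum_eq_zero fun j _ => by simp [glue, j.2]
    rw [h0, add_zero]
    refine Finset.sum_congr (by ext; simp) fun j _ => ?_
    simp [glue]
  have hext : glue a = glue b := by
    apply finFunctionFinEquiv.injective
    apply Fin.ext
    rw [hsum, hsum]
    exact hab
  funext j
  have := congrArg Fin.val (congrFun hext j)
  simpa [glue, Fin.ext_iff] using this

/-- Gluing of functions on `S` and `Sᶜ`. -/
theorem exists_restrict_eq (S : Set (Fin n)) (a : (j : S) → Fin (d j.val))
    (b : (j : ↥Sᶜ) → Fin (d j.val)) :
    ∃ i : (j : Fin n) → Fin (d j), (fun j : S => i j.val) = a ∧ (fun j : ↥Sᶜ => i j.val) = b := by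
  classical
  refine ⟨fun j => if h : j ∈ S then a ⟨j, h⟩ else b ⟨j, h⟩, ?_, ?_⟩
  · funext j
    simp
  · funext j
    have := j.2
    simp only [Set.mem_compl_iff] at this
    simp [this]

/-- Multi-indices split into their restrictions to `S` and `Sᶜ`. -/
noncomputable def splitIndex (S : Set (Fin n)) :
    ((j : Fin n) → Fin (d j)) ≃ ((j : S) → Fin (d j.val)) × ((j : ↥Sᶜ) → Fin (d j.val)) :=
  Equiv.ofBijective (fun i => (fun j : S => i j.val, fun j : ↥Sᶜ => i j.val)) <| by
    constructor
    · intro a b h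
      funext j
      by_cases hj : j ∈ S
      · exact congrFun (congrArg Prod.fst h) ⟨j, hj⟩
      · exact congrFun (congrArg Prod.snd h) ⟨j, hj⟩
    · rintro ⟨a, b⟩
      obtain ⟨i, ha, hb⟩ := exists_restrict_eq S a b
      exact ⟨i, Prod.ext ha hb⟩

theorem splitIndex_apply (S : Set (Fin n)) (i : (j : Fin n) → Fin (d j)) :
    splitIndex S i = (fun j : S => i j.val, fun j : ↥Sᶜ => i j.val) := rfl

end Exponents

section Segre

open MvPolynomial

/-- The prime ideal of polynomials vanishing where the variables in `s` vanish. -/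
noncomputable def coordinateIdeal {σ : Type*} (s : Set σ) : Ideal (MvPolynomial σ ℂ) :=
  open Classical in
  RingHom.ker (aeval (R := ℂ) (fun i => if i ∈ s then (0 : MvPolynomial σ ℂ) else X i))

instance {σ : Type*} (s : Set σ) : (coordinateIdeal s).IsPrime := by
  unfold coordinateIdeal
  exact RingHom.ker_isPrime _

theorem coordinateIdeal_mono {σ : Type*} {s t : Set σ} (h : s ⊆ t) :
    coordinateIdeal s ≤ coordinateIdeal t := by
  classical
  intro p hp
  simp only [coordinateIdeal, RingHom.mem_ker] at hp ⊢
  have hcomp : (aeval (R := ℂ) (fun i => if i ∈ t then (0 : MvPolynomial σ ℂ) else X i)) =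
      (aeval (R := ℂ) (fun i => if i ∈ t then (0 : MvPolynomial σ ℂ) else X i)).comp
        (aeval (R := ℂ) (fun i => if i ∈ s then (0 : MvPolynomial σ ℂ) else X i)) := by
    ext1 i
    by_cases hi : i ∈ s
    · simp [hi, h hi]
    · simp [hi]
  rw [hcomp, AlgHom.comp_apply, hp, map_zero]

theorem X_mul_X_mem_coordinateIdeal {σ : Type*} (s : Set σ) (i j : σ) :
    X i * X j ∈ coordinateIdeal s ↔ i ∈ s ∨ j ∈ s := by
  classical
  simp only [coordinateIdeal, RingHom.mem_ker, map_mul, aeval_X, mul_eq_zero]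
  constructor
  · rintro (h | h)
    · left; by_contra hi; simp [hi] at h
    · right; by_contra hi; simp [hi] at h
  · rintro (h | h) <;> simp [h]

variable {α β : Type*}

/-- The Segre parametrisation on coordinate rings. -/
noncomputable def segreHom (α β : Type*) :
    MvPolynomial (α × β) ℂ →ₐ[ℂ] MvPolynomial (α ⊕ β) ℂ :=
  aeval fun p => X (Sum.inl p.1) * X (Sum.inr p.2)

/-- The contraction of a coordinate ideal to the Segre ring. -/
noncomputable abbrev segreIdeal (s : Set (α ⊕ β)) : Ideal (segreHom α β).range :=
  (coordinateIdeal s).comap (segreHom α β).range.val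

theorem segreIdeal_lt_insert {s : Set (α ⊕ β)} {a : α} {b : β} {v : α ⊕ β}
    (hv : v = Sum.inl a ∨ v = Sum.inr b) (ha : Sum.inl a ∉ s) (hb : Sum.inr b ∉ s) :
    segreIdeal s < segreIdeal (insert v s) := by
  refine lt_of_le_not_ge (Ideal.comap_mono (coordinateIdeal_mono (Set.subset_insert v s))) ?_
  intro hle
  have hmem : (segreHom α β (X (a, b))) ∈ (segreHom α β).range := ⟨_, rfl⟩
  have hval : segreHom α β (X (a, b)) = X (Sum.inl a) * X (Sum.inr b) := by simp [segreHom]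
  have h1 : (⟨_, hmem⟩ : (segreHom α β).range) ∈ segreIdeal (insert v s) := by
    rw [Ideal.mem_comap]
    change segreHom α β (X (a, b)) ∈ _
    rw [hval, X_mul_X_mem_coordinateIdeal]
    rcases hv with rfl | rfl <;> simp
  have h2 := hle h1
  rw [Ideal.mem_comap] at h2
  change segreHom α β (X (a, b)) ∈ _ at h2
  rw [hval, X_mul_X_mem_coordinateIdeal] at h2
  tauto

theorem height_segreIdeal_insert {s : Set (α ⊕ β)} {a : α} {b : β} {v : α ⊕ β}
    (hv : v = Sum.inl a ∨ v = Sum.inr b) (ha : Sum.inl a ∉ s) (hb : Sum.inr b ∉ s) :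
    (segreIdeal s).height + 1 ≤ (segreIdeal (insert v s)).height :=
  Ideal.height_add_one_le_of_lt_of_isPrime (segreIdeal_lt_insert hv ha hb)

instance [Finite α] [Finite β] : IsNoetherianRing (segreHom α β).range :=
  isNoetherianRing_range (segreHom α β).toRingHom

theorem card_le_height_segreIdeal_univ [Fintype α] [Fintype β] [Nonempty α] [Nonempty β] :
    ((Fintype.card α - 1 + Fintype.card β : ℕ) : ℕ∞) ≤
      (segreIdeal (Set.univ : Set (α ⊕ β))).height := by
  classical
  obtain ⟨a₀⟩ := ‹Nonempty α›
  obtain ⟨b₀⟩ := ‹Nonempty β›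
  have hleft (s : Finset α) (hs : a₀ ∉ s) :
      ((s.card : ℕ) : ℕ∞) ≤ (segreIdeal (Sum.inl '' (s : Set α) : Set (α ⊕ β))).height := by
    induction s using Finset.induction_on with
    | empty => simp
    | insert a s has ih =>
      rw [Finset.card_insert_of_notMem has, Finset.coe_insert, Set.image_insert_eq, Nat.cast_add,
        Nat.cast_one]
      refine le_trans (add_le_add_left (ih fun h => hs (Finset.mem_insert_of_mem h)) 1) ?_
      exact height_segreIdeal_insert (a := a) (b := b₀) (Or.inl rfl) (by simpa using has) (by simp)
  have hright (t : Finset β) :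
      ((Fintype.card α - 1 + t.card : ℕ) : ℕ∞) ≤ (segreIdeal (Sum.inr '' (t : Set β) ∪
        Sum.inl '' ((Finset.univ.erase a₀ : Finset α) : Set α) : Set (α ⊕ β))).height := by
    induction t using Finset.induction_on with
    | empty => simpa [Finset.card_erase_of_mem] using hleft (Finset.univ.erase a₀) (by simp)
    | insert b t hbt ih =>
      rw [Finset.card_insert_of_notMem hbt, Finset.coe_insert, Set.image_insert_eq,
        Set.insert_union, ← add_assoc, Nat.cast_add, Nat.cast_one]
      refine le_trans (add_le_add_left ih 1) ?_
      exact height_segreIdeal_insert (a := a₀) (b := b) (Or.inr rfl) (by simp) (by simpa using hbt)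
  refine (hright Finset.univ).trans (Ideal.height_mono ?_)
  exact Ideal.comap_mono (coordinateIdeal_mono (Set.subset_univ _))

theorem eval_eq_zero_of_mem_segreIdeal_univ (g : MvPolynomial (α × β) ℂ)
    (hg : (segreHom α β).rangeRestrict g ∈ segreIdeal (Set.univ : Set (α ⊕ β))) :
    aeval (0 : α × β → ℂ) g = 0 := by
  classical
  rw [Ideal.mem_comap] at hg
  change segreHom α β g ∈ _ at hg
  simp only [coordinateIdeal, RingHom.mem_ker, Set.mem_univ, if_true] at hg
  have h := congrArg (aeval (R := ℂ) (0 : α ⊕ β → ℂ)) hg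
  rw [map_zero] at h
  have hcomp : aeval (0 : α × β → ℂ) = ((aeval (R := ℂ) (0 : α ⊕ β → ℂ)).comp
      (aeval (R := ℂ) (fun _ => (0 : MvPolynomial (α ⊕ β) ℂ)))).comp (segreHom α β) := by
    ext p
    simp [segreHom]
  rw [hcomp]
  exact h

/-- A point at which the relations among the Segre coordinates vanish is a product vector. -/
theorem eq_product_of_segre_relations (z : α × β → ℂ)
    (hz : ∀ g, segreHom α β g = 0 → aeval z g = 0) (hz0 : z ≠ 0) :
    ∃ (x : α → ℂ) (y : β → ℂ), x ≠ 0 ∧ y ≠ 0 ∧ z = fun p => x p.1 * y p.2 := by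
  obtain ⟨⟨a, b⟩, hab⟩ := Function.ne_iff.1 hz0
  simp only [Pi.zero_apply] at hab
  have hminor (a' : α) (b' : β) : z (a', b') * z (a, b) = z (a', b) * z (a, b') := by
    have := hz (X (a', b') * X (a, b) - X (a', b) * X (a, b')) (by simp [segreHom]; ring)
    simpa [sub_eq_zero] using this
  refine ⟨fun a' => z (a', b), fun b' => z (a, b') / z (a, b), ?_, ?_, ?_⟩
  · exact fun h => hab (congrFun h a)
  · intro h
    have := congrFun h b
    simp [hab] at this
  · funext ⟨a', b'⟩
    have := hminor a' b'
    field_simp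
    exact this

/-- Fewer than `|α| + |β| - 1` bilinear equations have a common solution with both
factors nonzero. -/
theorem exists_product_mem_ker [Fintype α] [Fintype β] [Nonempty α] [Nonempty β] {m : ℕ}
    (hm : m + 1 < Fintype.card α + Fintype.card β) (L : (α × β → ℂ) →ₗ[ℂ] (Fin m → ℂ)) :
    ∃ (x : α → ℂ) (y : β → ℂ), x ≠ 0 ∧ y ≠ 0 ∧ L (fun p => x p.1 * y p.2) = 0 := by
  classical
  by_contra! hno
  let ℓ : Fin m → MvPolynomial (α × β) ℂ := fun k => ∑ p, C (L (Pi.single p 1) k) * X p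
  have hℓ (z : α × β → ℂ) (k : Fin m) : aeval z (ℓ k) = L z k := by
    conv_rhs => rw [LinearMap.pi_apply_eq_sum_univ L z]
    simp only [ℓ, map_sum, map_mul, aeval_X, Finset.sum_apply, Pi.smul_apply, smul_eq_mul]
    refine Finset.sum_congr rfl fun p _ => ?_
    rw [mul_comm]
    congr 1
    rw [← MvPolynomial.algebraMap_eq, AlgHom.commutes]
    refine congrFun (congrArg L (_root_.funext fun q => ?_)) k
    simp [Pi.single_apply, eq_comm]
  let f := (segreHom α β).rangeRestrict
  have hf : Function.Surjective f := (segreHom α β).rangeRestrict_surjective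
  let J : Ideal (segreHom α β).range := Ideal.span (Set.range fun k => f (ℓ k))
  have hJ0 : J ≤ segreIdeal (Set.univ : Set (α ⊕ β)) := by
    rw [Ideal.span_le]
    rintro _ ⟨k, rfl⟩
    change segreHom α β (ℓ k) ∈ coordinateIdeal _
    simp only [ℓ, map_sum, map_mul]
    refine Ideal.sum_mem _ fun p _ => Ideal.mul_mem_left _ _ ?_
    simp only [segreHom, aeval_X]
    rw [X_mul_X_mem_coordinateIdeal]
    simp
  have hmax (M : Ideal (segreHom α β).range) (hM : M.IsMaximal) (hJM : J ≤ M) :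
      segreIdeal (Set.univ : Set (α ⊕ β)) ≤ M := by
    have hcm : (M.comap f).IsMaximal := Ideal.comap_isMaximal_of_surjective f hf
    obtain ⟨z, hz⟩ := isMaximal_iff_eq_vanishingIdeal_singleton.1 hcm
    have hmem (g : MvPolynomial (α × β) ℂ) : f g ∈ M ↔ aeval z g = 0 := by
      rw [← Ideal.mem_comap, hz, mem_vanishingIdeal_singleton_iff]
    have hLz : L z = 0 := by
      funext k
      rw [← hℓ]
      exact (hmem _).1 (hJM (Ideal.subset_span ⟨k, rfl⟩))
    have hz0 : z = 0 := by
      by_contra hz0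
      obtain ⟨x, y, hx, hy, rfl⟩ := eq_product_of_segre_relations z (fun g hg => by
        refine (hmem g).1 ?_
        have : f g = 0 := Subtype.ext hg
        rw [this]
        exact M.zero_mem) hz0
      exact hno x y hx hy hLz
    intro q hq
    obtain ⟨g, rfl⟩ := hf q
    rw [hmem, hz0]
    exact eval_eq_zero_of_mem_segreIdeal_univ g hq
  have : IsJacobsonRing (segreHom α β).range := isJacobsonRing_of_surjective ⟨f.toRingHom, hf⟩
  have hmin : segreIdeal (Set.univ : Set (α ⊕ β)) ∈ J.minimalPrimes := by
    refine ⟨⟨inferInstance, hJ0⟩, ?_⟩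
    rintro p ⟨hp, hJp⟩ -
    rw [← IsJacobsonRing.out ‹_› hp.isRadical]
    exact le_sInf fun M hM => hmax M hM.2 (hJp.trans hM.1)
  have h1 := Ideal.height_le_card_of_mem_minimalPrimes_span (Set.finite_range _) hmin
  have h2 : (Set.range fun k => f (ℓ k)).ncard ≤ m := by
    simpa [Set.image_univ] using Set.ncard_image_le (f := fun k => f (ℓ k)) Set.finite_univ
  have h3 := (card_le_height_segreIdeal_univ (α := α) (β := β)).trans (h1.trans (Nat.cast_le.2 h2))
  have h4 : Fintype.card α - 1 + Fintype.card β ≤ m := by exact_mod_cast h3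
  have : 0 < Fintype.card α := Fintype.card_pos
  omega

end Segre

section Dimensions

variable {n : ℕ} {d : Fin n → ℕ}

open Classical in
theorem card_mul_card_compl (S : Set (Fin n)) :
    Fintype.card ((j : S) → Fin (d j.val)) * Fintype.card ((j : ↥Sᶜ) → Fin (d j.val)) =
      Fintype.card ((j : Fin n) → Fin (d j)) := by
  rw [← Fintype.card_prod]
  exact Fintype.card_congr (splitIndex S).symm

theorem le_card_restrict {m : ℕ} (hd : ∀ j, 0 < d j) (hm : ∀ j, m ≤ d j) (S : Set (Fin n))
    (hS : S.Nonempty) [Fintype ((j : S) → Fin (d j.val))] :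
    m ≤ Fintype.card ((j : S) → Fin (d j.val)) := by
  classical
  obtain ⟨j, hj⟩ := hS
  simp only [← Nat.card_eq_fintype_card, Nat.card_pi, Nat.card_fin]
  exact (hm j).trans (Finset.single_le_prod' (f := fun j : S => d j.val)
    (fun j _ => hd j.val) (Finset.mem_univ (⟨j, hj⟩ : S)))

/-- Pairing of a vector with the geometric progressions with ratios `1, …, c`. -/
noncomputable def vandermondeForms (d : Fin n → ℕ) (c : ℕ) :
    EuclideanSpace ℂ ((j : Fin n) → Fin (d j)) →ₗ[ℂ] (Fin c → ℂ) where
  toFun ψ k := ∑ i, ψ i * ((k.val : ℂ) + 1) ^ (∑ j, (i j : ℕ) * (∑ l, d l) ^ (j : ℕ))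
  map_add' ψ ψ' := by
    funext k
    simp [add_mul, Finset.sum_add_distrib]
  map_smul' a ψ := by
    funext k
    simp [Finset.mul_sum, mul_assoc]

open Classical in
/-- A vector killed by all the forms is not biseparable when the forms are numerous enough. -/
theorem not_biseparable_of_mem_ker (hd : ∀ j, 0 < d j) (S : Set (Fin n)) {c : ℕ}
    (hc : Fintype.card ((j : S) → Fin (d j.val)) + Fintype.card ((j : ↥Sᶜ) → Fin (d j.val)) ≤ c + 1)
    (ψ : EuclideanSpace ℂ ((j : Fin n) → Fin (d j))) (hψ : vandermondeForms d c ψ = 0)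
    (hψ0 : ψ ≠ 0) : ¬ Biseparable S ψ := by
  rintro ⟨φ, χ, h⟩
  set e₁ : ((j : S) → Fin (d j.val)) → ℕ := fun i => ∑ j : S, (i j : ℕ) * (∑ l, d l) ^ (j.val : ℕ)
    with he₁
  set e₂ : ((j : ↥Sᶜ) → Fin (d j.val)) → ℕ :=
    fun i => ∑ j : ↥Sᶜ, (i j : ℕ) * (∑ l, d l) ^ (j.val : ℕ) with he₂
  have hφ : φ ≠ 0 := by
    rintro rfl
    exact hψ0 (by ext i; simp [h])
  have hχ : χ ≠ 0 := by
    rintro rfl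
    exact hψ0 (by ext i; simp [h])
  have hmul (k : Fin c) : (∑ i, φ i * ((k.val : ℂ) + 1) ^ e₁ i) *
      (∑ i, χ i * ((k.val : ℂ) + 1) ^ e₂ i) = 0 := by
    refine Eq.trans ?_ (congrFun hψ k)
    rw [Fintype.sum_mul_sum, ← Fintype.sum_prod_type', ← (splitIndex S).sum_comp]
    refine Finset.sum_congr rfl fun i _ => ?_
    have hexp : ∑ j, (i j : ℕ) * (∑ l, d l) ^ (j : ℕ) =
        e₁ (splitIndex S i).1 + e₂ (splitIndex S i).2 := by
      rw [← Fintype.sum_subtype_add_sum_subtype (fun j => j ∈ S)]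
      simp only [he₁, he₂, splitIndex_apply]
      congr 1
    rw [hexp, h, pow_add, splitIndex_apply]
    ring
  let s₁ := (Finset.range c).filter fun k : ℕ => ∑ i, φ i * ((k : ℂ) + 1) ^ e₁ i = 0
  let s₂ := (Finset.range c).filter fun k : ℕ => ∑ i, χ i * ((k : ℂ) + 1) ^ e₂ i = 0
  have h₁ : s₁.card < _ := card_lt_card_of_sparse_zeros e₁ (injective_sum_digits hd S) φ hφ s₁
    fun k hk => (Finset.mem_filter.1 hk).2
  have h₂ : s₂.card < _ := card_lt_card_of_sparse_zeros e₂ (injective_sum_digits hd Sᶜ) χ hχ s₂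
    fun k hk => (Finset.mem_filter.1 hk).2
  have hunion : Finset.range c ⊆ s₁ ∪ s₂ := by
    intro k hk
    rcases mul_eq_zero.1 (hmul ⟨k, Finset.mem_range.1 hk⟩) with h0 | h0
    · exact Finset.mem_union_left _ (Finset.mem_filter.2 ⟨hk, h0⟩)
    · exact Finset.mem_union_right _ (Finset.mem_filter.2 ⟨hk, h0⟩)
  have h₃ := (Finset.card_le_card hunion).trans (Finset.card_union_le _ _)
  rw [Finset.card_range] at h₃
  omega

open Classical in
/-- A subspace of small enough codimension contains a nonzero vector biseparable across `S`. -/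
theorem exists_biseparable_mem (hd : ∀ j, 0 < d j) (S : Set (Fin n))
    (V : Submodule ℂ (EuclideanSpace ℂ ((j : Fin n) → Fin (d j))))
    (hV : Fintype.card ((j : Fin n) → Fin (d j)) + 1 < Module.finrank ℂ V +
      (Fintype.card ((j : S) → Fin (d j.val)) + Fintype.card ((j : ↥Sᶜ) → Fin (d j.val)))) :
    ∃ ψ ∈ V, ψ ≠ 0 ∧ Biseparable S ψ := by
  have : ∀ j, Nonempty (Fin (d j)) := fun j => ⟨⟨0, hd j⟩⟩
  let E : (((j : S) → Fin (d j.val)) × ((j : ↥Sᶜ) → Fin (d j.val)) → ℂ) →ₗ[ℂ]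
      EuclideanSpace ℂ ((j : Fin n) → Fin (d j)) :=
    (WithLp.linearEquiv 2 ℂ _).symm.toLinearMap ∘ₗ LinearMap.funLeft ℂ ℂ (splitIndex S)
  let b := Module.finBasis ℂ (EuclideanSpace ℂ ((j : Fin n) → Fin (d j)) ⧸ V)
  have hrank := V.finrank_quotient_add_finrank
  rw [finrank_euclideanSpace] at hrank
  obtain ⟨x, y, hx, hy, hxy⟩ := exists_product_mem_ker (by omega)
    (b.equivFun.toLinearMap ∘ₗ V.mkQ ∘ₗ E)
  simp only [LinearMap.comp_apply, LinearEquiv.coe_coe, LinearEquiv.map_eq_zero_iff,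
    Submodule.mkQ_apply, Submodule.Quotient.mk_eq_zero] at hxy
  refine ⟨_, hxy, ?_, x, y, fun i => rfl⟩
  obtain ⟨a, ha⟩ := Function.ne_iff.1 hx
  obtain ⟨a', ha'⟩ := Function.ne_iff.1 hy
  obtain ⟨i, hi, hi'⟩ := exists_restrict_eq S a a'
  intro h0
  have h1 : x (fun j : S => i j.val) * y (fun j : ↥Sᶜ => i j.val) = 0 :=
    congrArg (fun ψ : EuclideanSpace ℂ ((j : Fin n) → Fin (d j)) => ψ i) h0
  rw [hi, hi'] at h1
  exact (mul_ne_zero ha ha') h1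

end Dimensions

theorem exists_submodule_le_finrank_eq {K M : Type*} [DivisionRing K] [AddCommGroup M] [Module K M]
    (U : Submodule K M) {m : ℕ} (hm : m ≤ Module.finrank K U) :
    ∃ W ≤ U, Module.finrank K W = m := by
  obtain ⟨v, hv⟩ := exists_linearIndependent_of_le_finrank hm
  have hv' := hv.map' U.subtype U.ker_subtype
  refine ⟨Submodule.span K (Set.range (U.subtype ∘ v)), ?_, ?_⟩
  · rw [Submodule.span_le]
    rintro _ ⟨k, rfl⟩
    exact (v k).2
  · rw [finrank_span_eq_card hv', Fintype.card_fin]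

/-- Theorem 2: the maximum dimension of a genuinely entangled subspace of
`⊗_j ℂ^{d_j}` (with `d` monotone) is `(d 0 − 1) * (∏_{j ≥ 1} d j − 1)`. -/
theorem max_dim_GES (n : ℕ) (hn : 2 ≤ n) (d : Fin n → ℕ) (hmono : Monotone d)
    (hd : ∀ j, 2 ≤ d j) (G : ℕ)
    (hG : G = (d ⟨0, by omega⟩ - 1) *
        ((∏ j ∈ Finset.univ.erase (⟨0, by omega⟩ : Fin n), d j) - 1)) :
    (∃ Gsub : Submodule ℂ (EuclideanSpace ℂ ((j : Fin n) → Fin (d j))),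
        Module.finrank ℂ ↥Gsub = G ∧ ∀ ψ ∈ Gsub, ψ ≠ 0 → GME ψ) ∧
    (∀ V : Submodule ℂ (EuclideanSpace ℂ ((j : Fin n) → Fin (d j))),
        Module.finrank ℂ ↥V = G + 1 →
        ∃ ψ ∈ V, ψ ≠ 0 ∧ ∃ S : Set (Fin n), S ≠ ∅ ∧ S ≠ Set.univ ∧ Biseparable S ψ) := by
  classical
  set z : Fin n := ⟨0, by omega⟩ with hz
  set D := ∏ j ∈ Finset.univ.erase z, d j
  have hpos (j : Fin n) : 0 < d j := lt_of_lt_of_le two_pos (hd j)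
  have hmin (j : Fin n) : d z ≤ d j := hmono (Fin.le_def.2 (Nat.zero_le _))
  have hDpos : 0 < D := Finset.prod_pos fun j _ => hpos j
  have hN : Fintype.card ((j : Fin n) → Fin (d j)) = d z * D := by
    simp only [Fintype.card_pi, Fintype.card_fin]
    exact (Finset.mul_prod_erase _ _ (Finset.mem_univ z)).symm
  have hGN : G + d z + D = d z * D + 1 := by
    obtain ⟨a, ha⟩ := Nat.exists_eq_add_of_le' (hpos z)
    obtain ⟨b, hb⟩ := Nat.exists_eq_add_of_le' hDpos
    rw [hG, ha, hb]
    simp only [Nat.add_sub_cancel]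
    ring
  constructor
  · have hker : G ≤ Module.finrank ℂ (LinearMap.ker (vandermondeForms d (d z + D - 1))) := by
      have h1 := (vandermondeForms d (d z + D - 1)).finrank_range_add_finrank_ker
      have h2 := Submodule.finrank_le (LinearMap.range (vandermondeForms d (d z + D - 1)))
      rw [finrank_euclideanSpace, hN] at h1
      rw [Module.finrank_fin_fun] at h2
      omega
    obtain ⟨W, hW, hWG⟩ := exists_submodule_le_finrank_eq _ hker
    refine ⟨W, hWG, fun ψ hψ hψ0 => ⟨hψ0, fun S hS hS' => ?_⟩⟩
    refine not_biseparable_of_mem_ker hpos S ?_ ψ (LinearMap.mem_ker.1 (hW hψ)) hψ0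
    have ha := le_card_restrict hpos hmin S (Set.nonempty_iff_ne_empty.2 hS)
    have hb := le_card_restrict hpos hmin Sᶜ (Set.nonempty_compl.2 hS')
    have hab := (card_mul_card_compl (d := d) S).trans hN
    obtain ⟨a, ha⟩ := Nat.exists_eq_add_of_le ha
    obtain ⟨b, hb⟩ := Nat.exists_eq_add_of_le hb
    have hz0 := hpos z
    rw [ha, hb] at hab ⊢
    have : d z + a + b ≤ D := by
      refine Nat.le_of_mul_le_mul_left ?_ hz0
      nlinarith [Nat.zero_le (a * b)]
    omega
  · intro V hV
    obtain ⟨S, hS⟩ : ∃ S : Set (Fin n), S = {z} := ⟨_, rfl⟩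
    have hsub : Subsingleton S := by
      rw [hS]
      infer_instance
    have hzS : z ∈ S := hS ▸ Set.mem_singleton z
    have hcard : Fintype.card ((j : S) → Fin (d j.val)) = d z := by
      rw [Fintype.card_pi, Fintype.prod_subsingleton _ (⟨z, hzS⟩ : S), Fintype.card_fin]
    have hcard' : Fintype.card ((j : ↥Sᶜ) → Fin (d j.val)) = D := by
      have h := (card_mul_card_compl (d := d) S).trans hN
      rw [hcard] at h
      exact Nat.eq_of_mul_eq_mul_left (hpos z) h
    obtain ⟨ψ, hψ, hψ0, hsep⟩ := exists_biseparable_mem hpos S V (by omega)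
    refine ⟨ψ, hψ, hψ0, S, Set.Nonempty.ne_empty ⟨z, hzS⟩, ?_, hsep⟩
    intro huniv
    have h1 : (⟨1, by omega⟩ : Fin n) ∈ S := huniv ▸ Set.mem_univ _
    simp [hS, hz] at h1
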